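/- In the K3 lattice L_{K3} = E8 ⊕ E8 ⊕ U ⊕ U ⊕ U of rank 22, there exists a primitive sublattice M (a ℤ-submodule with torsion-free quotient L_{K3}/M) of rank 11 such that M with the restricted form is isometric to ⟨2⟩ ⊕ ⟨-2⟩^{⊕10}, and the orthogonal complement M^⊥ = {x ∈ L_{K3} : x·m = 0 for all m ∈ M} with the restricted form is isometric to ⟨2⟩ ⊕ U(2) ⊕ E8(2). -/

import Mathlib

open Matrix

/-- The hyperbolic plane `U`, with Gram matrix `[[0,1],[1,0]]`. -/
abbrev latU : Matrix (Fin 2) (Fin 2) ℤ := !![0, 1; 1, 0]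

/-- The negative definite even unimodular lattice `E₈` (negative of the Cartan matrix). -/
abbrev latE8 : Matrix (Fin 8) (Fin 8) ℤ :=
  !![-2,  0,  1,  0,  0,  0,  0,  0;
      0, -2,  0,  1,  0,  0,  0,  0;
      1,  0, -2,  1,  0,  0,  0,  0;
      0,  1,  1, -2,  1,  0,  0,  0;
      0,  0,  0,  1, -2,  1,  0,  0;
      0,  0,  0,  0,  1, -2,  1,  0;
      0,  0,  0,  0,  0,  1, -2,  1;
      0,  0,  0,  0,  0,  0,  1, -2]

/-- Orthogonal direct sum of two lattices (block-diagonal Gram matrix). -/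
def dsum {a b : ℕ} (A : Matrix (Fin a) (Fin a) ℤ) (B : Matrix (Fin b) (Fin b) ℤ) :
    Matrix (Fin (a + b)) (Fin (a + b)) ℤ :=
  Matrix.reindex finSumFinEquiv finSumFinEquiv (Matrix.fromBlocks A 0 0 B)

/-- The bilinear form of the lattice with Gram matrix `G` : `x ⋅ y = xᵀ G y`. -/
def bform {n : ℕ} (G : Matrix (Fin n) (Fin n) ℤ) (x y : Fin n → ℤ) : ℤ :=
  x ⬝ᵥ G.mulVec y


/-- The K3 lattice `L_{K3} = E8 ⊕ E8 ⊕ U ⊕ U ⊕ U` of rank 22. -/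
def gramK3 : Matrix (Fin 22) (Fin 22) ℤ :=
  dsum latE8 (dsum latE8 (dsum latU (dsum latU latU)))

/-- `M = ⟨2⟩ ⊕ ⟨-2⟩^{⊕10}`, the Gram matrix `diag(2,-2,…,-2)` of rank 11. -/
def gramM : Matrix (Fin 11) (Fin 11) ℤ :=
  Matrix.diagonal ![2, -2, -2, -2, -2, -2, -2, -2, -2, -2, -2]

/-- `N = ⟨2⟩ ⊕ U(2) ⊕ E8(2)`. -/
def gramN : Matrix (Fin 11) (Fin 11) ℤ := dsum (dsum !![(2 : ℤ)] (2 • latU)) (2 • latE8)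

def cbB : Matrix (Fin 22) (Fin 11) ℤ :=
  !![5, -1, -2, -2, -2, -2, -2, -2, -2, 0, 0;
     8, -3, -3, -3, -3, -3, -3, -3, -3, 0, 0;
     10, -3, -3, -4, -4, -4, -4, -4, -4, 0, 0;
     15, -5, -5, -5, -6, -6, -6, -6, -6, 0, 0;
     12, -4, -4, -4, -4, -5, -5, -5, -5, 0, 0;
     9, -3, -3, -3, -3, -3, -4, -4, -4, 0, 0;
     6, -2, -2, -2, -2, -2, -2, -3, -3, 0, 0;
     3, -1, -1, -1, -1, -1, -1, -1, -2, 0, 0;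
     -5, 1, 2, 2, 2, 2, 2, 2, 2, 0, 0;
     -8, 3, 3, 3, 3, 3, 3, 3, 3, 0, 0;
     -10, 3, 3, 4, 4, 4, 4, 4, 4, 0, 0;
     -15, 5, 5, 5, 6, 6, 6, 6, 6, 0, 0;
     -12, 4, 4, 4, 4, 5, 5, 5, 5, 0, 0;
     -9, 3, 3, 3, 3, 3, 4, 4, 4, 0, 0;
     -6, 2, 2, 2, 2, 2, 2, 3, 3, 0, 0;
     -3, 1, 1, 1, 1, 1, 1, 1, 2, 0, 0;
     3, -1, -1, -1, -1, -1, -1, -1, -1, 0, -1;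
     3, -1, -1, -1, -1, -1, -1, -1, -1, -1, 0;
     -3, 1, 1, 1, 1, 1, 1, 1, 1, 0, 1;
     -3, 1, 1, 1, 1, 1, 1, 1, 1, 1, 0;
     -3, 1, 1, 1, 1, 1, 1, 1, 1, 1, 1;
     3, -1, -1, -1, -1, -1, -1, -1, -1, -1, -1]

def cbA : Matrix (Fin 11) (Fin 22) ℤ :=
  !![0, -1, 0, 0, 0, 0, 0, 0, 0, 0, 0, 0, 0, 0, 0, 0, 3, 3, 0, 0, 3, 0;
     1, -1, 0, 0, 0, 0, 0, 0, 0, 0, 0, 0, 0, 0, 0, 0, 1, 1, 0, 0, 1, 0;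
     -1, -1, 1, 0, 0, 0, 0, 0, 0, 0, 0, 0, 0, 0, 0, 0, 1, 1, 0, 0, 1, 0;
     0, -1, -1, 1, 0, 0, 0, 0, 0, 0, 0, 0, 0, 0, 0, 0, 1, 1, 0, 0, 1, 0;
     0, 0, 0, -1, 1, 0, 0, 0, 0, 0, 0, 0, 0, 0, 0, 0, 1, 1, 0, 0, 1, 0;
     0, 0, 0, 0, -1, 1, 0, 0, 0, 0, 0, 0, 0, 0, 0, 0, 1, 1, 0, 0, 1, 0;
     0, 0, 0, 0, 0, -1, 1, 0, 0, 0, 0, 0, 0, 0, 0, 0, 1, 1, 0, 0, 1, 0;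
     0, 0, 0, 0, 0, 0, -1, 1, 0, 0, 0, 0, 0, 0, 0, 0, 1, 1, 0, 0, 1, 0;
     0, 0, 0, 0, 0, 0, 0, -1, 0, 0, 0, 0, 0, 0, 0, 0, 1, 1, 0, 0, 1, 0;
     0, 0, 0, 0, 0, 0, 0, 0, 0, 0, 0, 0, 0, 0, 0, 0, 1, 0, 0, 0, 1, 0;
     0, 0, 0, 0, 0, 0, 0, 0, 0, 0, 0, 0, 0, 0, 0, 0, 0, 1, 0, 0, 1, 0]

def cbD : Matrix (Fin 11) (Fin 22) ℤ :=
  !![0, -1, 0, 0, 0, 0, 0, 0, 0, 1, 0, 0, 0, 0, 0, 0, 3, 3, -3, -3, 3, -3;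
     -1, 1, 0, 0, 0, 0, 0, 0, 1, -1, 0, 0, 0, 0, 0, 0, -1, -1, 1, 1, -1, 1;
     1, 1, -1, 0, 0, 0, 0, 0, -1, -1, 1, 0, 0, 0, 0, 0, -1, -1, 1, 1, -1, 1;
     0, 1, 1, -1, 0, 0, 0, 0, 0, -1, -1, 1, 0, 0, 0, 0, -1, -1, 1, 1, -1, 1;
     0, 0, 0, 1, -1, 0, 0, 0, 0, 0, 0, -1, 1, 0, 0, 0, -1, -1, 1, 1, -1, 1;
     0, 0, 0, 0, 1, -1, 0, 0, 0, 0, 0, 0, -1, 1, 0, 0, -1, -1, 1, 1, -1, 1;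
     0, 0, 0, 0, 0, 1, -1, 0, 0, 0, 0, 0, 0, -1, 1, 0, -1, -1, 1, 1, -1, 1;
     0, 0, 0, 0, 0, 0, 1, -1, 0, 0, 0, 0, 0, 0, -1, 1, -1, -1, 1, 1, -1, 1;
     0, 0, 0, 0, 0, 0, 0, 1, 0, 0, 0, 0, 0, 0, 0, -1, -1, -1, 1, 1, -1, 1;
     0, 0, 0, 0, 0, 0, 0, 0, 0, 0, 0, 0, 0, 0, 0, 0, -1, 0, 1, 0, -1, 1;
     0, 0, 0, 0, 0, 0, 0, 0, 0, 0, 0, 0, 0, 0, 0, 0, 0, -1, 0, 1, -1, 1]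

def cbB2 : Matrix (Fin 22) (Fin 11) ℤ :=
  !![0, 0, 0, 1, 0, 0, 0, 0, 0, 0, 0;
     0, 0, 0, 0, 1, 0, 0, 0, 0, 0, 0;
     0, 0, 0, 0, 0, 1, 0, 0, 0, 0, 0;
     0, 0, 0, 0, 0, 0, 1, 0, 0, 0, 0;
     0, 0, 0, 0, 0, 0, 0, 1, 0, 0, 0;
     0, 0, 0, 0, 0, 0, 0, 0, 1, 0, 0;
     0, 0, 0, 0, 0, 0, 0, 0, 0, 1, 0;
     0, 0, 0, 0, 0, 0, 0, 0, 0, 0, 1;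
     0, 0, 0, 1, 0, 0, 0, 0, 0, 0, 0;
     0, 0, 0, 0, 1, 0, 0, 0, 0, 0, 0;
     0, 0, 0, 0, 0, 1, 0, 0, 0, 0, 0;
     0, 0, 0, 0, 0, 0, 1, 0, 0, 0, 0;
     0, 0, 0, 0, 0, 0, 0, 1, 0, 0, 0;
     0, 0, 0, 0, 0, 0, 0, 0, 1, 0, 0;
     0, 0, 0, 0, 0, 0, 0, 0, 0, 1, 0;
     0, 0, 0, 0, 0, 0, 0, 0, 0, 0, 1;
     0, 1, 0, 0, 0, 0, 0, 0, 0, 0, 0;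
     0, 0, 1, 0, 0, 0, 0, 0, 0, 0, 0;
     0, 1, 0, 0, 0, 0, 0, 0, 0, 0, 0;
     0, 0, 1, 0, 0, 0, 0, 0, 0, 0, 0;
     1, 0, 0, 0, 0, 0, 0, 0, 0, 0, 0;
     1, 0, 0, 0, 0, 0, 0, 0, 0, 0, 0]

def cbA2 : Matrix (Fin 11) (Fin 22) ℤ :=
  !![0, 0, 0, 0, 0, 0, 0, 0, 0, 0, 0, 0, 0, 0, 0, 0, 0, 0, 0, 0, 1, 0;
     0, 0, 0, 0, 0, 0, 0, 0, 0, 0, 0, 0, 0, 0, 0, 0, 1, 0, 0, 0, 0, 0;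
     0, 0, 0, 0, 0, 0, 0, 0, 0, 0, 0, 0, 0, 0, 0, 0, 0, 1, 0, 0, 0, 0;
     1, 0, 0, 0, 0, 0, 0, 0, 0, 0, 0, 0, 0, 0, 0, 0, 0, 0, 0, 0, 0, 0;
     0, 1, 0, 0, 0, 0, 0, 0, 0, 0, 0, 0, 0, 0, 0, 0, 0, 0, 0, 0, 0, 0;
     0, 0, 1, 0, 0, 0, 0, 0, 0, 0, 0, 0, 0, 0, 0, 0, 0, 0, 0, 0, 0, 0;
     0, 0, 0, 1, 0, 0, 0, 0, 0, 0, 0, 0, 0, 0, 0, 0, 0, 0, 0, 0, 0, 0;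
     0, 0, 0, 0, 1, 0, 0, 0, 0, 0, 0, 0, 0, 0, 0, 0, 0, 0, 0, 0, 0, 0;
     0, 0, 0, 0, 0, 1, 0, 0, 0, 0, 0, 0, 0, 0, 0, 0, 0, 0, 0, 0, 0, 0;
     0, 0, 0, 0, 0, 0, 1, 0, 0, 0, 0, 0, 0, 0, 0, 0, 0, 0, 0, 0, 0, 0;
     0, 0, 0, 0, 0, 0, 0, 1, 0, 0, 0, 0, 0, 0, 0, 0, 0, 0, 0, 0, 0, 0]

def cbK : Matrix (Fin 22) (Fin 11) ℤ :=
  !![0, 0, 0, 0, 0, 0, 0, 0, 0, 0, 0;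
     0, 0, 0, 0, 0, 0, 0, 0, 0, 0, 0;
     0, 0, 0, 0, 0, 0, 0, 0, 0, 0, 0;
     0, 0, 0, 0, 0, 0, 0, 0, 0, 0, 0;
     0, 0, 0, 0, 0, 0, 0, 0, 0, 0, 0;
     0, 0, 0, 0, 0, 0, 0, 0, 0, 0, 0;
     0, 0, 0, 0, 0, 0, 0, 0, 0, 0, 0;
     0, 0, 0, 0, 0, 0, 0, 0, 0, 0, 0;
     -5, -1, -2, -2, -2, -2, -2, -2, -2, 0, 0;
     -8, -3, -3, -3, -3, -3, -3, -3, -3, 0, 0;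
     -10, -3, -3, -4, -4, -4, -4, -4, -4, 0, 0;
     -15, -5, -5, -5, -6, -6, -6, -6, -6, 0, 0;
     -12, -4, -4, -4, -4, -5, -5, -5, -5, 0, 0;
     -9, -3, -3, -3, -3, -3, -4, -4, -4, 0, 0;
     -6, -2, -2, -2, -2, -2, -2, -3, -3, 0, 0;
     -3, -1, -1, -1, -1, -1, -1, -1, -2, 0, 0;
     0, 0, 0, 0, 0, 0, 0, 0, 0, 0, 0;
     0, 0, 0, 0, 0, 0, 0, 0, 0, 0, 0;
     -3, -1, -1, -1, -1, -1, -1, -1, -1, 0, -1;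
     -3, -1, -1, -1, -1, -1, -1, -1, -1, -1, 0;
     0, 0, 0, 0, 0, 0, 0, 0, 0, 0, 0;
     3, 1, 1, 1, 1, 1, 1, 1, 1, 1, 1]

set_option maxRecDepth 100000

theorem cb_hD : cbBᵀ * gramK3 = cbD := by decide +kernel
theorem cb_hM : cbD * cbB = gramM := by decide +kernel
theorem cb_hAB : cbA * cbB = 1 := by decide +kernel
theorem cb_hN : cbB2ᵀ * (gramK3 * cbB2) = gramN := by decide +kernel
theorem cb_hAB2 : cbA2 * cbB2 = 1 := by decide +kernel
theorem cb_hDB2 : cbD * cbB2 = 0 := by decide +kernel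
theorem cb_hK : cbK * cbD + cbB2 * cbA2 = 1 := by decide +kernel
theorem cb_hsymm : gramK3ᵀ = gramK3 := by decide +kernel

theorem cb_bform_comp {m : ℕ} (G : Matrix (Fin 22) (Fin 22) ℤ) (B : Matrix (Fin 22) (Fin m) ℤ)
    (u v : Fin m → ℤ) : bform G (B *ᵥ u) (B *ᵥ v) = bform (Bᵀ * (G * B)) u v := by
  unfold bform
  rw [← Matrix.mulVec_mulVec, ← Matrix.mulVec_mulVec, Matrix.dotProduct_mulVec u,
    Matrix.vecMul_transpose]

theorem cb_bform_comm (x y : Fin 22 → ℤ) : bform gramK3 x y = bform gramK3 y x := by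
  unfold bform
  rw [dotProduct_comm, Matrix.dotProduct_mulVec y, ← Matrix.mulVec_transpose, cb_hsymm]

theorem cb_iso (A : Matrix (Fin 11) (Fin 22) ℤ) (B : Matrix (Fin 22) (Fin 11) ℤ)
    (H : Matrix (Fin 11) (Fin 11) ℤ) (hAB : A * B = 1) (hH : Bᵀ * (gramK3 * B) = H) :
    ∃ e : LinearMap.range B.mulVecLin ≃ₗ[ℤ] (Fin 11 → ℤ),
        ∀ x y : LinearMap.range B.mulVecLin, bform H (e x) (e y) = bform gramK3 x y := by
  have hinj : Function.Injective B.mulVecLin := by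
    intro u v h
    have := congrArg (fun z => A *ᵥ z) h
    simpa [Matrix.mulVec_mulVec, hAB] using this
  let e := LinearEquiv.ofInjective B.mulVecLin hinj
  refine ⟨e.symm, fun x y => ?_⟩
  obtain ⟨u, rfl⟩ := e.surjective x
  obtain ⟨v, rfl⟩ := e.surjective y
  have h1 : ((e u : LinearMap.range B.mulVecLin) : Fin 22 → ℤ) = B *ᵥ u := rfl
  have h2 : ((e v : LinearMap.range B.mulVecLin) : Fin 22 → ℤ) = B *ᵥ v := rfl
  rw [e.symm_apply_apply, e.symm_apply_apply, h1, h2, cb_bform_comp, hH]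

theorem cb_perp (x : Fin 22 → ℤ) (u : Fin 11 → ℤ) :
    bform gramK3 x (cbB *ᵥ u) = u ⬝ᵥ (cbD *ᵥ x) := by
  rw [cb_bform_comm, ← cb_hD, ← Matrix.mulVec_mulVec, Matrix.dotProduct_mulVec u,
    Matrix.vecMul_transpose]
  rfl

/-- There is a primitive rank-11 sublattice `M` of the K3 lattice isometric to
`⟨2⟩ ⊕ ⟨-2⟩^{⊕10}` whose orthogonal complement `M^⊥` is isometric to `⟨2⟩ ⊕ U(2) ⊕ E8(2)`. -/
theorem exists_primitive_coble_in_K3 :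
    ∃ M : Submodule ℤ (Fin 22 → ℤ),
      (∀ c : ℤ, c ≠ 0 → ∀ x, c • x ∈ M → x ∈ M) ∧
      (∃ e : M ≃ₗ[ℤ] (Fin 11 → ℤ),
        ∀ x y : M, bform gramM (e x) (e y) = bform gramK3 x y) ∧
      ∃ W : Submodule ℤ (Fin 22 → ℤ),
        (∀ x, x ∈ W ↔ ∀ m ∈ M, bform gramK3 x m = 0) ∧
        ∃ f : W ≃ₗ[ℤ] (Fin 11 → ℤ),
          ∀ x y : W, bform gramN (f x) (f y) = bform gramK3 x y := by
  refine ⟨LinearMap.range cbB.mulVecLin, ?_, cb_iso cbA cbB gramM cb_hAB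
    (by rw [← Matrix.mul_assoc, cb_hD, cb_hM]), LinearMap.range cbB2.mulVecLin, ?_,
    cb_iso cbA2 cbB2 gramN cb_hAB2 cb_hN⟩
  · rintro c hc x ⟨u, hu⟩
    have hu' : cbB *ᵥ u = c • x := hu
    refine ⟨cbA *ᵥ x, ?_⟩
    change cbB *ᵥ (cbA *ᵥ x) = x
    have h1 : u = c • (cbA *ᵥ x) := by
      rw [← Matrix.mulVec_smul, ← hu', Matrix.mulVec_mulVec, cb_hAB, Matrix.one_mulVec]
    have h2 : c • (cbB *ᵥ (cbA *ᵥ x)) = c • x := by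
      rw [← Matrix.mulVec_smul, ← h1, hu']
    exact smul_right_injective _ hc h2
  · intro x
    constructor
    · rintro ⟨v, rfl⟩ m ⟨u, rfl⟩
      change bform gramK3 (cbB2 *ᵥ v) (cbB *ᵥ u) = 0
      rw [cb_perp, Matrix.mulVec_mulVec, cb_hDB2]
      simp
    · intro h
      have hD : cbD *ᵥ x = 0 := by
        apply dotProduct_self_eq_zero.mp
        rw [← cb_perp]
        exact h _ ⟨_, rfl⟩
      refine ⟨cbA2 *ᵥ x, ?_⟩
      change cbB2 *ᵥ (cbA2 *ᵥ x) = x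
      have h2 : (cbK * cbD + cbB2 * cbA2) *ᵥ x = x := by rw [cb_hK, Matrix.one_mulVec]
      rw [Matrix.add_mulVec, ← Matrix.mulVec_mulVec, hD, Matrix.mulVec_zero, zero_add,
        ← Matrix.mulVec_mulVec] at h2
      exact h2
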